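/- Let p be a prime number. Then the set of odd primes q, with q ≠ p, such that both p and −p are quadratic non-residues modulo q (i.e. the Legendre symbols (p/q) and (−p/q) both equal −1) has positive natural density within the set of all prime numbers. -/

import Mathlib

open Filter Topology

/-!
Since `(-n/q) = χ₄(q) (n/q)` for odd primes `q`, both `n` and `-n` are nonresidues modulo `q`
exactly when `q ≡ 1 [MOD 4]` and `(n/q) = -1`. By quadratic reciprocity these primes fill a union
of residue classes modulo `4 * n`, all of them coprime to `4 * n`, and the Chinese remainder
theorem shows that the union is nonempty as soon as `n` is not a square. It remains to know that
each such class contains a proportion `1 / φ(4 * n)` of all primes.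

The latter follows from the Wiener–Ikehara theorem, because `∑ Λ(k) k⁻ˢ` over a residue class,
minus its pole, is continuous up to the line `Re s = 1` (nonvanishing of Dirichlet `L`-functions
there). In the variable `v = log x`, the relative error of the summatory function is a bounded
function whose Laplace transform extends continuously to the imaginary axis. By Parseval and the
Riemann–Lebesgue lemma its averages against Fejér kernels of every width tend to `0`, and since it
cannot drop quickly it must tend to `0` itself.
-/

section LaplaceTransform

open Complex MeasureTheory Set
open scoped FourierTransform Real

variable {H : ℝ → ℂ} {C : ℝ} {g : ℂ → ℂ} {φ : ℝ → ℂ}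

theorem integrable_mul_cexp_neg_mul (hm : AEStronglyMeasurable H) (hC : ∀ v, ‖H v‖ ≤ C)
    (h0 : ∀ v ≤ 0, H v = 0) {s : ℂ} (hs : 0 < s.re) :
    Integrable fun v : ℝ ↦ H v * cexp (-s * v) := by
  have hIoi : IntegrableOn (fun v : ℝ ↦ H v * cexp (-s * v)) (Ioi 0) :=
    (integrableOn_exp_mul_complex_Ioi (by simpa using hs) 0).bdd_mul hm.restrict
      (Eventually.of_forall hC)
  refine (integrableOn_iff_integrable_of_support_subset fun v hv ↦ ?_).mp hIoi
  by_contra hv0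
  exact hv (by simp [h0 v (not_lt.mp hv0)])

theorem integral_mul_cexp_mul_fourier (hm : AEStronglyMeasurable H) (hC : ∀ v, ‖H v‖ ≤ C)
    (h0 : ∀ v ≤ 0, H v = 0) (hL : ∀ s : ℂ, 0 < s.re → ∫ v : ℝ, H v * cexp (-s * v) = g s)
    (hφ : Integrable φ) {ε : ℝ} (hε : 0 < ε) :
    ∫ v : ℝ, H v * cexp (-ε * v) * 𝓕 φ v = ∫ u : ℝ, g (ε + 2 * π * u * I) * φ u := by
  have hfourier (u : ℝ) : 𝓕 (fun v : ℝ ↦ H v * cexp (-ε * v)) u = g (ε + 2 * π * u * I) := by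
    rw [Real.fourier_real_eq_integral_exp_smul, ← hL _ (by simpa using hε)]
    refine integral_congr_ae (Eventually.of_forall fun v ↦ ?_)
    simp only [smul_eq_mul]
    rw [mul_left_comm, ← Complex.exp_add]
    push_cast
    ring_nf
  simp only [← hfourier]
  simpa using! (VectorFourier.integral_fourierIntegral_smul_eq_flip (L := innerₗ ℝ)
    Real.continuous_fourierChar continuous_inner
    (integrable_mul_cexp_neg_mul hm hC h0 (s := ε) (by simpa using hε)) hφ).symm

theorem norm_mul_cexp_neg_mul_le (hC : ∀ v, ‖H v‖ ≤ C) (h0 : ∀ v ≤ 0, H v = 0) {ε : ℝ}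
    (hε : 0 ≤ ε) (v : ℝ) : ‖H v * cexp (-ε * v)‖ ≤ C := by
  rcases le_or_gt v 0 with hv | hv
  · simpa [h0 v hv] using (norm_nonneg _).trans (hC v)
  · have hexp : ‖cexp (-ε * v)‖ ≤ 1 := by
      rw [Complex.norm_exp]
      simpa using mul_nonneg hε hv.le
    simpa using mul_le_mul (hC v) hexp (norm_nonneg _) ((norm_nonneg _).trans (hC v))

theorem tendsto_integral_mul_cexp_mul {ψ : ℝ → ℂ} (hm : AEStronglyMeasurable H)
    (hC : ∀ v, ‖H v‖ ≤ C) (h0 : ∀ v ≤ 0, H v = 0) (hψ : Integrable ψ) :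
    Tendsto (fun ε : ℝ ↦ ∫ v : ℝ, H v * cexp (-ε * v) * ψ v) (𝓝[>] 0)
      (𝓝 (∫ v, H v * ψ v)) := by
  refine tendsto_integral_filter_of_dominated_convergence (fun v ↦ C * ‖ψ v‖) ?_ ?_
    (hψ.norm.const_mul C) ?_
  · exact Eventually.of_forall fun ε ↦
      (hm.mul (by fun_prop : Continuous _).aestronglyMeasurable).mul hψ.aestronglyMeasurable
  · filter_upwards [self_mem_nhdsWithin] with ε hε
    refine Eventually.of_forall fun v ↦ ?_
    rw [norm_mul]
    exact mul_le_mul_of_nonneg_right (norm_mul_cexp_neg_mul_le hC h0 (le_of_lt hε) v)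
      (norm_nonneg _)
  · refine Eventually.of_forall fun v ↦ ?_
    have hcont : Continuous fun ε : ℝ ↦ H v * cexp (-ε * v) * ψ v := by fun_prop
    simpa using (hcont.tendsto 0).mono_left nhdsWithin_le_nhds

theorem tendsto_integral_boundary_mul (hg : ContinuousOn g {s | 0 ≤ s.re})
    (hφ : Continuous φ) (hφc : HasCompactSupport φ) :
    Tendsto (fun ε : ℝ ↦ ∫ u : ℝ, g (ε + 2 * π * u * I) * φ u) (𝓝[>] 0)
      (𝓝 (∫ u : ℝ, g (2 * π * u * I) * φ u)) := by
  have hcont : ContinuousOn (fun ε : ℝ ↦ ∫ u : ℝ, g (ε + 2 * π * u * I) * φ u) (Ici 0) := by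
    refine continuousOn_integral_of_compact_support hφc.isCompact ?_
      fun ε u _ hu ↦ by simp [image_eq_zero_of_notMem_tsupport hu]
    refine (hg.comp (t := {s : ℂ | 0 ≤ s.re}) ?_ fun z hz ↦ ?_).mul (by fun_prop)
    · fun_prop
    · simpa using hz.1
  simpa using (hcont 0 self_mem_Ici).tendsto.mono_left (nhdsWithin_mono _ Ioi_subset_Ici_self)

theorem integral_mul_fourier_eq_boundary (hm : AEStronglyMeasurable H) (hC : ∀ v, ‖H v‖ ≤ C)
    (h0 : ∀ v ≤ 0, H v = 0) (hL : ∀ s : ℂ, 0 < s.re → ∫ v : ℝ, H v * cexp (-s * v) = g s)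
    (hg : ContinuousOn g {s | 0 ≤ s.re}) (hφ : Continuous φ) (hφc : HasCompactSupport φ)
    (hφf : Integrable (𝓕 φ)) :
    ∫ v : ℝ, H v * 𝓕 φ v = ∫ u : ℝ, g (2 * π * u * I) * φ u := by
  refine tendsto_nhds_unique ((tendsto_integral_mul_cexp_mul hm hC h0 hφf).congr' ?_)
    (tendsto_integral_boundary_mul hg hφ hφc)
  filter_upwards [self_mem_nhdsWithin] with ε hε
  exact integral_mul_cexp_mul_fourier hm hC h0 hL (hφ.integrable_of_hasCompactSupport hφc) hε

theorem fourier_fourierChar_smul (φ : ℝ → ℂ) (x v : ℝ) :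
    𝓕 (fun u ↦ 𝐞 (x * u) • φ u) v = 𝓕 φ (v - x) := by
  simp only [Real.fourier_real_eq, smul_smul, ← AddChar.map_add_eq_mul]
  exact integral_congr_ae (Eventually.of_forall fun u ↦ by ring_nf)

theorem tendsto_integral_mul_fourier_sub (hm : AEStronglyMeasurable H) (hC : ∀ v, ‖H v‖ ≤ C)
    (h0 : ∀ v ≤ 0, H v = 0) (hL : ∀ s : ℂ, 0 < s.re → ∫ v : ℝ, H v * cexp (-s * v) = g s)
    (hg : ContinuousOn g {s | 0 ≤ s.re}) (hφ : Continuous φ) (hφc : HasCompactSupport φ)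
    (hφf : Integrable (𝓕 φ)) :
    Tendsto (fun x : ℝ ↦ ∫ v : ℝ, H v * 𝓕 φ (v - x)) atTop (𝓝 0) := by
  have hRL : Tendsto (fun x : ℝ ↦ 𝓕 (fun u : ℝ ↦ g (2 * π * u * I) * φ u) (-x)) atTop (𝓝 0) :=
    (Real.zero_at_infty_fourier _).comp
      (tendsto_neg_atTop_atBot.mono_right atBot_le_cocompact)
  refine hRL.congr fun x ↦ ?_
  have hpair := integral_mul_fourier_eq_boundary (φ := fun u ↦ 𝐞 (x * u) • φ u) hm hC h0 hL hg
    (by fun_prop) hφc.smul_left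
    ((hφf.comp_sub_right x).congr
      (Eventually.of_forall fun v ↦ (fourier_fourierChar_smul φ x v).symm))
  simp only [fourier_fourierChar_smul] at hpair
  rw [hpair, Real.fourier_real_eq]
  refine integral_congr_ae (Eventually.of_forall fun u ↦ ?_)
  simp only [Circle.smul_def, smul_eq_mul, mul_neg, neg_neg, mul_comm u x]
  ring

end LaplaceTransform

section FejerKernel

open MeasureTheory Set
open scoped FourierTransform Real

/-- The tent function of height `l` supported on `[-l, l]`, the Fourier side of the Fejér
kernel. -/
noncomputable def tent (l u : ℝ) : ℝ := max 0 (l - |u|)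

/-- The Fejér kernel on the real line, normalized as the Fourier transform of `tent 1`. It is
written with `Real.sinc` so that its value at `0` is `1`. -/
noncomputable def fejerKernel (y : ℝ) : ℝ := Real.sinc (π * y) ^ 2

theorem continuous_tent (l : ℝ) : Continuous (tent l) := by
  unfold tent
  fun_prop

theorem tent_of_le_abs {l u : ℝ} (h : l ≤ |u|) : tent l u = 0 :=
  max_eq_left (sub_nonpos.mpr h)

theorem hasCompactSupport_tent (l : ℝ) : HasCompactSupport (tent l) :=
  HasCompactSupport.intro (isCompact_closedBall 0 l) fun u hu ↦
    tent_of_le_abs (by simpa using (not_le.mp (mt mem_closedBall_zero_iff.mpr hu)).le)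

theorem fejerKernel_nonneg (y : ℝ) : 0 ≤ fejerKernel y := sq_nonneg _

theorem continuous_fejerKernel : Continuous fejerKernel :=
  (Real.continuous_sinc.comp (continuous_const_mul π)).pow 2

theorem sinc_sq_le (x : ℝ) : Real.sinc x ^ 2 ≤ 2 * (1 + x ^ 2)⁻¹ := by
  have hsinc : Real.sinc x ^ 2 ≤ 1 := (sq_le_one_iff_abs_le_one _).mpr (Real.abs_sinc_le_one x)
  have hsin : x ^ 2 * Real.sinc x ^ 2 ≤ 1 := by
    rcases eq_or_ne x 0 with rfl | hx
    · simp
    · rw [Real.sinc_of_ne_zero hx, div_pow, mul_div_cancel₀ _ (pow_ne_zero 2 hx)]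
      exact Real.sin_sq_le_one x
  rw [← div_eq_mul_inv, le_div_iff₀ (by positivity)]
  linarith

theorem integrable_fejerKernel : Integrable fejerKernel := by
  have hsinc : Integrable fun x ↦ Real.sinc x ^ 2 :=
    (integrable_inv_one_add_sq.const_mul 2).mono' (Real.continuous_sinc.pow 2).aestronglyMeasurable
      (Eventually.of_forall fun x ↦ by simpa using sinc_sq_le x)
  exact hsinc.comp_mul_left' Real.pi_ne_zero

theorem integral_fejerKernel_pos : 0 < ∫ y, fejerKernel y :=
  integral_pos_of_integrable_nonneg_nonzero continuous_fejerKernel integrable_fejerKernel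
    fejerKernel_nonneg (x := 0) (by simp [fejerKernel])

theorem integral_sub_mul_cos (l c : ℝ) :
    ∫ u in (0 : ℝ)..l, (l - u) * Real.cos (c * u) = l ^ 2 / 2 * Real.sinc (c * l / 2) ^ 2 := by
  rcases eq_or_ne c 0 with rfl | hc
  · have hint : ∫ u in (0 : ℝ)..l, (l - u) = l ^ 2 / 2 := by
      rw [intervalIntegral.integral_sub (by simp) (by simp)]
      simp only [intervalIntegral.integral_const, integral_id, smul_eq_mul]
      ring
    simpa using hint
  rcases eq_or_ne l 0 with rfl | hl
  · simp
  have hderiv (u : ℝ) : HasDerivAt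
      (fun u ↦ (l - u) * (Real.sin (c * u) / c) - Real.cos (c * u) / c ^ 2)
      ((l - u) * Real.cos (c * u)) u := by
    have hlin : HasDerivAt (fun u : ℝ ↦ c * u) c u := by
      simpa using (hasDerivAt_id u).const_mul c
    convert! (((hasDerivAt_id u).const_sub l).mul (hlin.sin.div_const c)).sub
      (hlin.cos.div_const (c ^ 2)) using 1
    simp only [id_eq]
    field_simp
    ring
  have hcont : Continuous fun u : ℝ ↦ (l - u) * Real.cos (c * u) := by fun_prop
  rw [intervalIntegral.integral_eq_sub_of_hasDerivAt (fun u _ ↦ hderiv u)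
    (hcont.intervalIntegrable _ _), Real.sinc_of_ne_zero (by simp [hc, hl]), div_pow,
    Real.sin_sq_eq_half_sub, mul_div_cancel₀ _ two_ne_zero]
  simp only [mul_zero, Real.sin_zero, Real.cos_zero, sub_self, zero_mul, zero_div]
  field_simp
  ring

theorem fourier_ofReal_of_even {f : ℝ → ℝ} (hf : Integrable f) (heven : Function.Even f) (y : ℝ) :
    𝓕 (fun u ↦ (f u : ℂ)) y = ((∫ u, f u * Real.cos (2 * π * y * u) : ℝ) : ℂ) := by
  have hcos : Integrable fun u ↦ f u * Real.cos (2 * π * y * u) :=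
    hf.mul_bdd (c := 1) (by fun_prop : Continuous _).aestronglyMeasurable
      (Eventually.of_forall fun u ↦ Real.abs_cos_le_one _)
  have hsin : Integrable fun u ↦ f u * Real.sin (2 * π * y * u) :=
    hf.mul_bdd (c := 1) (by fun_prop : Continuous _).aestronglyMeasurable
      (Eventually.of_forall fun u ↦ Real.abs_sin_le_one _)
  have hodd : ∫ u, f u * Real.sin (2 * π * y * u) = 0 := by
    have hneg := integral_neg_eq_self (fun u ↦ f u * Real.sin (2 * π * y * u)) volume
    simp only [heven _, mul_neg, Real.sin_neg, integral_neg] at hneg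
    linarith
  have hsplit (u : ℝ) : Complex.exp ((-2 * π * u * y : ℝ) * Complex.I) • (f u : ℂ) =
      ((f u * Real.cos (2 * π * y * u) : ℝ) : ℂ) -
        ((f u * Real.sin (2 * π * y * u) : ℝ) : ℂ) * Complex.I := by
    rw [show -2 * π * u * y = -(2 * π * y * u) by ring, Complex.exp_mul_I, smul_eq_mul]
    push_cast
    rw [Complex.cos_neg, Complex.sin_neg]
    ring
  simp_rw [Real.fourier_real_eq_integral_exp_smul, hsplit]
  rw [integral_sub hcos.ofReal (hsin.ofReal.mul_const _), integral_mul_const,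
    integral_complex_ofReal, integral_complex_ofReal, hodd]
  simp

theorem fourier_tent {l : ℝ} (hl : 0 ≤ l) (y : ℝ) :
    𝓕 (fun u ↦ (tent l u : ℂ)) y = ((l ^ 2 * fejerKernel (l * y) : ℝ) : ℂ) := by
  have habs : ∫ u, tent l u * Real.cos (2 * π * y * u) =
      2 * ∫ u in Ioi 0, tent l u * Real.cos (2 * π * y * u) := by
    rw [← integral_comp_abs]
    refine integral_congr_ae (Eventually.of_forall fun u ↦ ?_)
    rcases abs_choice u with h | h <;> simp [h, tent]
  have hIoi : ∫ u in Ioi 0, tent l u * Real.cos (2 * π * y * u) =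
      ∫ u in (0 : ℝ)..l, (l - u) * Real.cos (2 * π * y * u) := by
    rw [intervalIntegral.integral_of_le hl,
      setIntegral_eq_of_subset_of_forall_sdiff_eq_zero measurableSet_Ioi Ioc_subset_Ioi_self]
    · refine setIntegral_congr_fun measurableSet_Ioc fun u hu ↦ ?_
      simp only [tent, abs_of_pos hu.1, max_eq_right (sub_nonneg.mpr hu.2)]
    · rintro u ⟨hu0, hul⟩
      have hlu : l ≤ |u| := (not_le.mp fun h ↦ hul ⟨hu0, h⟩).le.trans (le_abs_self u)
      simp [tent_of_le_abs hlu]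
  rw [fourier_ofReal_of_even ((continuous_tent l).integrable_of_hasCompactSupport
    (hasCompactSupport_tent l)) (fun u ↦ by simp [tent]), habs, hIoi, integral_sub_mul_cos]
  congr 1
  rw [fejerKernel]
  ring_nf

theorem tendsto_integral_mul_fejerKernel {H : ℝ → ℝ} {C : ℝ} {g : ℂ → ℂ}
    (hm : AEStronglyMeasurable H) (hC : ∀ v, |H v| ≤ C) (h0 : ∀ v ≤ 0, H v = 0)
    (hL : ∀ s : ℂ, 0 < s.re → ∫ v : ℝ, (H v : ℂ) * Complex.exp (-s * v) = g s)
    (hg : ContinuousOn g {s | 0 ≤ s.re}) {l : ℝ} (hl : 0 < l) :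
    Tendsto (fun x : ℝ ↦ ∫ v, H v * fejerKernel (l * (v - x))) atTop (𝓝 0) := by
  have hkernel : Integrable (𝓕 fun u ↦ (tent l u : ℂ)) := by
    simp only [funext (fourier_tent hl.le)]
    exact ((integrable_fejerKernel.comp_mul_left' hl.ne').const_mul (l ^ 2)).ofReal
  have hlim := tendsto_integral_mul_fourier_sub
    (Complex.continuous_ofReal.comp_aestronglyMeasurable hm)
    (fun v ↦ (Complex.norm_real _).trans_le (hC v)) (fun v hv ↦ by simp [h0 v hv]) hL hg
    (Complex.continuous_ofReal.comp (continuous_tent l))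
    ((hasCompactSupport_tent l).comp_left Complex.ofReal_zero) hkernel
  have hscaled : Tendsto (fun x : ℝ ↦ l ^ 2 * ∫ v, H v * fejerKernel (l * (v - x))) atTop
      (𝓝 0) := by
    refine (Complex.continuous_re.tendsto' 0 0 Complex.zero_re).comp hlim |>.congr fun x ↦ ?_
    have hreal : ∫ v, (H v : ℂ) * 𝓕 (fun u ↦ (tent l u : ℂ)) (v - x) =
        ((∫ v, l ^ 2 * (H v * fejerKernel (l * (v - x))) : ℝ) : ℂ) := by
      simp only [fourier_tent hl.le, ← Complex.ofReal_mul, integral_complex_ofReal,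
        mul_left_comm (H _)]
    rw [← integral_const_mul]
    exact congrArg Complex.re hreal
  refine (mul_zero (l ^ 2)⁻¹ ▸ hscaled.const_mul (l ^ 2)⁻¹).congr fun x ↦ ?_
  exact inv_mul_cancel_left₀ (pow_ne_zero 2 hl.ne') _

end FejerKernel

section Tauberian

open MeasureTheory Set

/-- Schmidt's one-sided oscillation condition in additive form: over sufficiently short windows, `H`
eventually decreases by at most `ε`. -/
def SlowlyDecreasing (H : ℝ → ℝ) : Prop :=
  ∀ ε > 0, ∃ δ > 0, ∀ᶠ v in atTop, ∀ w ∈ Icc v (v + δ), H v - ε ≤ H w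

theorem slowlyDecreasing_of_monotoneOn_exp_mul {H : ℝ → ℝ} {C c : ℝ} (hC : ∀ v, |H v| ≤ C)
    (hmono : MonotoneOn (fun v ↦ Real.exp v * (H v + c)) (Ioi 0)) : SlowlyDecreasing H := by
  intro ε hε
  have hB : 0 < C + |c| + 1 := by
    have := (abs_nonneg _).trans (hC 0)
    positivity
  refine ⟨ε / (C + |c| + 1), by positivity, ?_⟩
  filter_upwards [eventually_gt_atTop 0] with v hv w ⟨hvw, hwδ⟩
  have hratio : Real.exp (v - w) * (H v + c) ≤ H w + c := by
    have h := hmono hv (mem_Ioi.mpr (hv.trans_le hvw)) hvw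
    rw [Real.exp_sub, div_mul_eq_mul_div, div_le_iff₀ (Real.exp_pos w)]
    linarith
  have hexp : |1 - Real.exp (v - w)| ≤ w - v := by
    rw [abs_of_nonneg (by simpa using hvw)]
    linarith [Real.add_one_le_exp (v - w)]
  have hbound : |H v + c| ≤ C + |c| + 1 := by linarith [abs_add_le (H v) c, hC v]
  have hdrop : (1 - Real.exp (v - w)) * (H v + c) ≤ ε := calc
    (1 - Real.exp (v - w)) * (H v + c) ≤ |1 - Real.exp (v - w)| * |H v + c| := by
      rw [← abs_mul]
      exact le_abs_self _
    _ ≤ (ε / (C + |c| + 1)) * (C + |c| + 1) := by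
      gcongr
      linarith
    _ = ε := div_mul_cancel₀ _ hB.ne'
  linarith

theorem sub_le_integral_mul_of_le_on {α : Type*} [MeasurableSpace α] {μ : Measure α}
    {f K : α → ℝ} {s : Set α} {m C : ℝ} (hs : MeasurableSet s) (hK : Integrable K μ)
    (hK0 : ∀ y, 0 ≤ K y) (hf : AEStronglyMeasurable f μ) (hC : ∀ y, |f y| ≤ C)
    (hm : ∀ y ∈ s, m ≤ f y) :
    m * (∫ y in s, K y ∂μ) - C * ∫ y in sᶜ, K y ∂μ ≤ ∫ y, f y * K y ∂μ := by
  have hfK : Integrable (fun y ↦ f y * K y) μ := hK.bdd_mul hf (Eventually.of_forall hC)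
  rw [← integral_add_compl hs hfK, sub_eq_add_neg, ← neg_mul, ← integral_const_mul,
    ← integral_const_mul]
  refine add_le_add ?_ ?_
  · exact setIntegral_mono_on (hK.const_mul m).integrableOn hfK.integrableOn hs fun y hy ↦
      mul_le_mul_of_nonneg_right (hm y hy) (hK0 y)
  · exact integral_mono (hK.const_mul (-C)).integrableOn hfK.integrableOn fun y ↦
      mul_le_mul_of_nonneg_right (neg_le_of_abs_le (hC y)) (hK0 y)

theorem exists_scale_pos {K : ℝ → ℝ} (hK : Integrable K) (hpos : 0 < ∫ y, K y) {m δ : ℝ} (C : ℝ)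
    (hm : 0 < m) (hδ : 0 < δ) :
    ∃ l > 0, 0 < m * (∫ v in Ioc (-δ) δ, K (l * v)) - C * ∫ v in (Ioc (-δ) δ)ᶜ, K (l * v) := by
  have hmass : Tendsto (fun l ↦ ∫ y in (l * -δ)..(l * δ), K y) atTop (𝓝 (∫ y, K y)) :=
    intervalIntegral_tendsto_integral hK (tendsto_id.atTop_mul_const_of_neg (neg_neg_of_pos hδ))
      (tendsto_id.atTop_mul_const hδ)
  have hlim := (hmass.const_mul m).sub ((hmass.const_sub (∫ y, K y)).const_mul C)
  rw [sub_self, mul_zero, sub_zero] at hlim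
  obtain ⟨l, hl, hl0⟩ := ((hlim.eventually_const_lt (mul_pos hm hpos)).and
    (eventually_gt_atTop 0)).exists
  refine ⟨l, hl0, ?_⟩
  have hin : ∫ v in Ioc (-δ) δ, K (l * v) = l⁻¹ * ∫ y in (l * -δ)..(l * δ), K y := by
    rw [← intervalIntegral.integral_of_le (by linarith),
      intervalIntegral.integral_comp_mul_left K hl0.ne', smul_eq_mul]
  have hout : ∫ v in (Ioc (-δ) δ)ᶜ, K (l * v) =
      l⁻¹ * ((∫ y, K y) - ∫ y in (l * -δ)..(l * δ), K y) := by
    rw [setIntegral_compl measurableSet_Ioc (hK.comp_mul_left' hl0.ne'), hin,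
      Measure.integral_comp_mul_left, abs_of_pos (inv_pos.mpr hl0), smul_eq_mul, mul_sub]
  rw [hin, hout, mul_left_comm, mul_left_comm C, ← mul_sub]
  exact mul_pos (inv_pos.mpr hl0) hl

theorem exists_forall_le_integral_mul_kernel {K : ℝ → ℝ} (hK : Integrable K) (hK0 : ∀ y, 0 ≤ K y)
    (hpos : 0 < ∫ y, K y) {m δ : ℝ} (C : ℝ) (hm : 0 < m) (hδ : 0 < δ) :
    ∃ l > 0, ∃ κ > 0, ∀ f : ℝ → ℝ, AEStronglyMeasurable f → (∀ v, |f v| ≤ C) → ∀ x : ℝ,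
      (∀ v ∈ Icc (x - δ) (x + δ), m ≤ f v) → κ ≤ ∫ v, f v * K (l * (v - x)) := by
  obtain ⟨l, hl, hκ⟩ := exists_scale_pos hK hpos C hm hδ
  refine ⟨l, hl, _, hκ, fun f hf hC x hfx ↦ ?_⟩
  rw [← integral_add_right_eq_self (fun v ↦ f v * K (l * (v - x))) x]
  simp only [add_sub_cancel_right]
  refine sub_le_integral_mul_of_le_on measurableSet_Ioc (hK.comp_mul_left' hl.ne')
    (fun y ↦ hK0 _) (hf.comp_measurePreserving (measurePreserving_add_right volume x))
    (fun y ↦ hC _) fun y hy ↦ hfx _ ⟨?_, ?_⟩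
  · linarith [hy.1]
  · linarith [hy.2]

theorem SlowlyDecreasing.tendsto_zero {H K : ℝ → ℝ} {C : ℝ} (hH : SlowlyDecreasing H)
    (hm : AEStronglyMeasurable H) (hC : ∀ v, |H v| ≤ C) (hK : Integrable K) (hK0 : ∀ y, 0 ≤ K y)
    (hpos : 0 < ∫ y, K y)
    (hlim : ∀ l > 0, Tendsto (fun x ↦ ∫ v, H v * K (l * (v - x))) atTop (𝓝 0)) :
    Tendsto H atTop (𝓝 0) := by
  -- If `ε ≤ H x`, then `ε / 2 ≤ H` on a window to the right of `x`; if `H x ≤ -ε`, then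
  -- `H ≤ -ε / 2` on a window to its left. Neither is compatible with vanishing local averages.
  rw [Metric.tendsto_atTop']
  intro ε hε
  obtain ⟨δ, hδ, hslow⟩ := hH (ε / 2) (half_pos hε)
  obtain ⟨l, hl, κ, hκ, hlower⟩ :=
    exists_forall_le_integral_mul_kernel hK hK0 hpos C (half_pos hε) (half_pos hδ)
  obtain ⟨N, hN⟩ := eventually_atTop.mp
    (hslow.and ((hlim l hl).abs.eventually_lt_const (by simpa using hκ)))
  refine ⟨N + δ, fun x hx ↦ ?_⟩
  rw [Real.dist_eq, sub_zero, abs_lt]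
  constructor
  · by_contra! hneg
    have hmass := hlower (-H) hm.neg (by simpa using hC) (x - δ / 2) fun v ⟨hv₁, hv₂⟩ ↦ by
      have := (hN v (by linarith)).1 x ⟨by linarith, by linarith⟩
      simp only [Pi.neg_apply]
      linarith
    simp only [Pi.neg_apply, neg_mul, integral_neg] at hmass
    linarith [neg_abs_le (∫ v, H v * K (l * (v - (x - δ / 2)))), (hN (x - δ / 2) (by linarith)).2]
  · by_contra! hlarge
    have hmass := hlower H hm hC (x + δ / 2) fun v ⟨hv₁, hv₂⟩ ↦ by
      have := (hN x (by linarith)).1 v ⟨by linarith, by linarith⟩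
      linarith
    linarith [le_abs_self (∫ v, H v * K (l * (v - (x + δ / 2)))), (hN (x + δ / 2) (by linarith)).2]

theorem SlowlyDecreasing.tendsto_zero_of_laplace {H : ℝ → ℝ} {C : ℝ} {g : ℂ → ℂ}
    (hH : SlowlyDecreasing H) (hm : AEStronglyMeasurable H) (hC : ∀ v, |H v| ≤ C)
    (h0 : ∀ v ≤ 0, H v = 0)
    (hL : ∀ s : ℂ, 0 < s.re → ∫ v : ℝ, (H v : ℂ) * Complex.exp (-s * v) = g s)
    (hg : ContinuousOn g {s | 0 ≤ s.re}) : Tendsto H atTop (𝓝 0) :=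
  hH.tendsto_zero hm hC integrable_fejerKernel fejerKernel_nonneg integral_fejerKernel_pos
    fun _ hl ↦ tendsto_integral_mul_fejerKernel hm hC h0 hL hg hl

end Tauberian

section WienerIkehara

open Complex Finset MeasureTheory Asymptotics

variable {f : ℕ → ℝ} {B c : ℝ}

/-- The relative error `e⁻ᵛ ∑_{k ≤ eᵛ} f k - c` of the approximation of the summatory function of
`f` by `c x`, in the variable `v = log x` and cut off to `v > 0`. -/
noncomputable def relativeError (f : ℕ → ℝ) (c v : ℝ) : ℝ :=
  if 0 < v then (∑ k ∈ Icc 1 ⌊Real.exp v⌋₊, f k) * Real.exp (-v) - c else 0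

theorem relativeError_of_pos {v : ℝ} (hv : 0 < v) :
    relativeError f c v = (∑ k ∈ Icc 1 ⌊Real.exp v⌋₊, f k) * Real.exp (-v) - c :=
  if_pos hv

theorem relativeError_of_nonpos {v : ℝ} (hv : v ≤ 0) : relativeError f c v = 0 :=
  if_neg hv.not_gt

theorem measurable_relativeError : Measurable (relativeError f c) := by
  have hsum : Measurable fun v : ℝ ↦ ∑ k ∈ Icc 1 ⌊Real.exp v⌋₊, f k :=
    (measurable_from_nat (f := fun n ↦ ∑ k ∈ Icc 1 n, f k)).comp
      (Nat.measurable_floor.comp Real.measurable_exp)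
  exact Measurable.ite measurableSet_Ioi ((hsum.mul (by fun_prop)).sub_const c) measurable_const

theorem sum_Icc_floor_exp_mul_exp_neg_le (hB0 : 0 ≤ B) (hB : ∀ n : ℕ, ∑ k ∈ Icc 1 n, f k ≤ B * n)
    (v : ℝ) : (∑ k ∈ Icc 1 ⌊Real.exp v⌋₊, f k) * Real.exp (-v) ≤ B := calc
  _ ≤ B * Real.exp v * Real.exp (-v) := by
    gcongr
    exact (hB _).trans (mul_le_mul_of_nonneg_left (Nat.floor_le (Real.exp_nonneg v)) hB0)
  _ = B := by rw [mul_assoc, ← Real.exp_add, add_neg_cancel, Real.exp_zero, mul_one]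

theorem abs_relativeError_le (hf : ∀ n, 0 ≤ f n) (hB0 : 0 ≤ B)
    (hB : ∀ n : ℕ, ∑ k ∈ Icc 1 n, f k ≤ B * n) (v : ℝ) : |relativeError f c v| ≤ B + |c| := by
  rcases le_or_gt v 0 with hv | hv
  · rw [relativeError_of_nonpos hv, abs_zero]
    positivity
  · rw [relativeError_of_pos hv]
    refine (abs_sub _ _).trans (add_le_add_left ?_ _)
    rw [abs_of_nonneg (mul_nonneg (sum_nonneg fun k _ ↦ hf k) (Real.exp_nonneg _))]
    exact sum_Icc_floor_exp_mul_exp_neg_le hB0 hB v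

theorem slowlyDecreasing_relativeError (hf : ∀ n, 0 ≤ f n) (hB0 : 0 ≤ B)
    (hB : ∀ n : ℕ, ∑ k ∈ Icc 1 n, f k ≤ B * n) : SlowlyDecreasing (relativeError f c) := by
  have hsum {v : ℝ} (hv : 0 < v) :
      Real.exp v * (relativeError f c v + c) = ∑ k ∈ Icc 1 ⌊Real.exp v⌋₊, f k := by
    rw [relativeError_of_pos hv, sub_add_cancel, mul_left_comm, ← Real.exp_add, add_neg_cancel,
      Real.exp_zero, mul_one]
  refine slowlyDecreasing_of_monotoneOn_exp_mul (c := c) (abs_relativeError_le hf hB0 hB)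
    fun v (hv : 0 < v) w (hw : 0 < w) hvw ↦ ?_
  simp only [hsum hv, hsum hw]
  exact sum_le_sum_of_subset_of_nonneg
    (Icc_subset_Icc_right (Nat.floor_le_floor (Real.exp_le_exp.mpr hvw))) fun k _ _ ↦ hf k

theorem LSeries_one_add_eq_laplace (hf : ∀ n, 0 ≤ f n)
    (hO : (fun n ↦ ∑ k ∈ Icc 1 n, f k) =O[atTop] fun n ↦ (n : ℝ)) {s : ℂ} (hs : 0 < s.re) :
    LSeries (fun n ↦ f n) (1 + s) = (1 + s) * ∫ v in Set.Ioi (0 : ℝ),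
      (((∑ k ∈ Icc 1 ⌊Real.exp v⌋₊, f k) * Real.exp (-v) : ℝ) : ℂ) * cexp (-s * v) := by
  rw [LSeries_eq_mul_integral_of_nonneg f zero_le_one (by simpa using hs)
    (by simpa only [Real.rpow_one] using hO) hf, ← Real.exp_zero, ← integral_comp_exp_Ioi]
  congr 1
  refine setIntegral_congr_fun measurableSet_Ioi fun v _ ↦ ?_
  have hcpow : (Real.exp v : ℂ) * (Real.exp v : ℂ) ^ (-(1 + s + 1)) =
      cexp (-v) * cexp (-s * v) := by
    rw [ofReal_exp, cpow_def_of_ne_zero (Complex.exp_ne_zero _), ← ofReal_exp,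
      ← ofReal_log (Real.exp_nonneg v), Real.log_exp, ofReal_exp, ← Complex.exp_add,
      ← Complex.exp_add]
    ring_nf
  simp only [real_smul]
  push_cast at hcpow ⊢
  linear_combination (∑ k ∈ Icc 1 ⌊Real.exp v⌋₊, (f k : ℂ)) * hcpow

theorem one_add_ne_zero_of_re_nonneg {s : ℂ} (hs : 0 ≤ s.re) : 1 + s ≠ 0 := fun h ↦ by
  have hre := congrArg re h
  simp only [add_re, one_re, zero_re] at hre
  linarith

theorem laplace_relativeError (hf : ∀ n, 0 ≤ f n) (hB0 : 0 ≤ B)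
    (hB : ∀ n : ℕ, ∑ k ∈ Icc 1 n, f k ≤ B * n) {s : ℂ} (hs : 0 < s.re) :
    ∫ v : ℝ, (relativeError f c v : ℂ) * cexp (-s * v) =
      LSeries (fun n ↦ f n) (1 + s) / (1 + s) - c / s := by
  have hO : (fun n ↦ ∑ k ∈ Icc 1 n, f k) =O[atTop] fun n ↦ (n : ℝ) :=
    IsBigO.of_bound B (Eventually.of_forall fun n ↦ by
      simpa [abs_of_nonneg (sum_nonneg fun k _ ↦ hf k)] using hB n)
  have hint : Integrable fun v : ℝ ↦ (relativeError f c v : ℂ) * cexp (-s * v) :=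
    integrable_mul_cexp_neg_mul (C := B + |c|)
      (continuous_ofReal.comp_aestronglyMeasurable measurable_relativeError.aestronglyMeasurable)
      (fun v ↦ (norm_real _).trans_le (abs_relativeError_le hf hB0 hB v))
      (fun v hv ↦ by simp [relativeError_of_nonpos hv]) hs
  have hexp : IntegrableOn (fun v : ℝ ↦ (c : ℂ) * cexp (-s * v)) (Set.Ioi 0) :=
    (integrableOn_exp_mul_complex_Ioi (by simpa using hs) 0).const_mul _
  have hsplit : LSeries (fun n ↦ f n) (1 + s) =
      (1 + s) * ((∫ v : ℝ, (relativeError f c v : ℂ) * cexp (-s * v)) + c / s) := by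
    have hsupp : ∫ v in Set.Ioi (0 : ℝ), (relativeError f c v : ℂ) * cexp (-s * v) =
        ∫ v : ℝ, (relativeError f c v : ℂ) * cexp (-s * v) :=
      setIntegral_eq_integral_of_forall_compl_eq_zero fun v hv ↦ by
        simp [relativeError_of_nonpos (not_lt.mp hv)]
    have hc : ∫ v in Set.Ioi (0 : ℝ), (c : ℂ) * cexp (-s * v) = c / s := by
      rw [integral_const_mul, integral_exp_mul_complex_Ioi (by simpa using hs)]
      simp [div_eq_mul_inv]
    rw [LSeries_one_add_eq_laplace hf hO hs, ← hsupp, ← hc, ← integral_add hint.integrableOn hexp]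
    congr 1
    refine setIntegral_congr_fun measurableSet_Ioi fun v hv ↦ ?_
    simp only [relativeError_of_pos hv]
    push_cast
    ring
  rw [hsplit, mul_div_cancel_left₀ _ (one_add_ne_zero_of_re_nonneg hs.le), add_sub_cancel_right]

theorem tendsto_sum_div_of_LSeries_eq {G : ℂ → ℂ} (hf : ∀ n, 0 ≤ f n)
    (hB : ∀ n : ℕ, ∑ k ∈ Icc 1 n, f k ≤ B * n) (hG : ContinuousOn G {s | 1 ≤ s.re})
    (hLG : ∀ s : ℂ, 1 < s.re → LSeries (fun n ↦ f n) s = G s + c / (s - 1)) :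
    Tendsto (fun n : ℕ ↦ (∑ k ∈ Icc 1 n, f k) / n) atTop (𝓝 c) := by
  have hB0 : 0 ≤ B := (hf 1).trans (by simpa using hB 1)
  have hzero : Tendsto (relativeError f c) atTop (𝓝 0) := by
    refine SlowlyDecreasing.tendsto_zero_of_laplace (g := fun s ↦ (G (1 + s) - c) / (1 + s))
      (slowlyDecreasing_relativeError hf hB0 hB) measurable_relativeError.aestronglyMeasurable
      (abs_relativeError_le hf hB0 hB) (fun v ↦ relativeError_of_nonpos) (fun s hs ↦ ?_) ?_
    · have hs0 : s ≠ 0 := by rintro rfl; simp at hs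
      have := one_add_ne_zero_of_re_nonneg hs.le
      rw [laplace_relativeError hf hB0 hB hs, hLG _ (by simpa using hs), add_sub_cancel_left]
      field_simp
      ring
    · refine ((hG.comp (by fun_prop) fun s hs ↦ ?_).sub continuousOn_const).div (by fun_prop)
        fun s ↦ one_add_ne_zero_of_re_nonneg
      simpa using hs
  have hlog := (hzero.comp (Real.tendsto_log_atTop.comp
    (tendsto_natCast_atTop_atTop (R := ℝ)))).add_const c
  rw [zero_add] at hlog
  refine hlog.congr' ?_
  filter_upwards [eventually_gt_atTop 1] with n hn
  have hn1 : (1 : ℝ) < n := by exact_mod_cast hn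
  simp only [Function.comp_apply]
  rw [relativeError_of_pos (Real.log_pos hn1), sub_add_cancel, Real.exp_neg,
    Real.exp_log (by linarith), Nat.floor_natCast, div_eq_mul_inv]

end WienerIkehara

section PrimeDensity

open Finset ArithmeticFunction ArithmeticFunction.vonMangoldt
open scoped Nat.Prime

/-- The Chebyshev function `ψ` restricted to the arguments in `S`. -/
noncomputable def psiOn (S : Set ℕ) (n : ℕ) : ℝ := ∑ k ∈ Icc 1 n, S.indicator vonMangoldt k

open Classical in
/-- The number of primes up to `n` that lie in `S`. -/
noncomputable def primeCountingOn (S : Set ℕ) (n : ℕ) : ℕ := #{q ∈ Nat.primesLE n | q ∈ S}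

/-- The primes in `S` have natural density `δ` among all primes. The set `S` may also
contain composite numbers, which are not counted. -/
def HasPrimeDensity (S : Set ℕ) (δ : ℝ) : Prop :=
  Tendsto (fun n ↦ (primeCountingOn S n : ℝ) / π n) atTop (𝓝 δ)

theorem HasPrimeDensity.congr {S T : Set ℕ} {δ : ℝ} (hS : HasPrimeDensity S δ)
    (hST : ∀ q, q.Prime → (q ∈ S ↔ q ∈ T)) : HasPrimeDensity T δ := by
  classical
  refine Tendsto.congr (fun n ↦ ?_) hS
  rw [primeCountingOn, primeCountingOn,
    filter_congr fun q hq ↦ hST q (Nat.prime_of_mem_primesLE hq)]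

theorem HasPrimeDensity.tendsto_natCard_div {P : ℕ → Prop} {δ : ℝ}
    (h : HasPrimeDensity {q | P q} δ) (hP : ∀ q, P q → q.Prime) :
    Tendsto (fun n : ℕ ↦ (Nat.card {q : ℕ // P q ∧ q ≤ n} : ℝ) /
      Nat.card {q : ℕ // q.Prime ∧ q ≤ n}) atTop (𝓝 δ) := by
  classical
  refine Tendsto.congr (fun n ↦ ?_) h
  rw [primeCountingOn, ← Nat.primesLE_card_eq_primeCounting,
    Nat.subtype_card {q ∈ Nat.primesLE n | P q} fun q ↦ ?_,
    Nat.subtype_card (Nat.primesLE n) fun q ↦ Nat.mem_primesLE.trans and_comm]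
  · rfl
  · rw [mem_filter, Nat.mem_primesLE]
    exact ⟨fun hq ↦ ⟨hq.2, hq.1.1⟩, fun hq ↦ ⟨⟨hq.2, hP q hq.1⟩, hq.1⟩⟩

theorem tendsto_primeCounting_mul_log_sub_theta_div :
    Tendsto (fun n : ℕ ↦ (π n * Real.log n - Chebyshev.theta n) / n) atTop (𝓝 0) := by
  refine (Chebyshev.integral_theta_div_log_sq_isLittleO.tendsto_div_nhds_zero.comp
    (tendsto_natCast_atTop_atTop (R := ℝ))).congr' ?_
  filter_upwards [eventually_ge_atTop 2] with n hn
  have hn2 : (2 : ℝ) ≤ n := by exact_mod_cast hn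
  have hlog : Real.log n ≠ 0 := (Real.log_pos (by linarith)).ne'
  have hπ := Chebyshev.primeCounting_eq_theta_div_log_add_integral hn2
  rw [Nat.floor_natCast] at hπ
  rw [Function.comp_apply, hπ]
  field_simp
  ring

theorem tendsto_psi_sub_theta_div :
    Tendsto (fun n : ℕ ↦ (Chebyshev.psi n - Chebyshev.theta n) / n) atTop (𝓝 0) := by
  have hsqrt : Real.sqrt =o[atTop] fun x : ℝ ↦ x :=
    Asymptotics.isLittleO_of_tendsto (fun x hx ↦ by rw [hx, Real.sqrt_zero])
      (Real.tendsto_sqrt_atTop.inv_tendsto_atTop.congr fun _ ↦ Real.sqrt_div_self.symm)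
  exact (Chebyshev.isBigO_psi_sub_theta_sqrt.trans_isLittleO hsqrt).tendsto_div_nhds_zero.comp
    (tendsto_natCast_atTop_atTop (R := ℝ))

theorem abs_primeCountingOn_mul_log_sub_psiOn_le (S : Set ℕ) (n : ℕ) :
    |primeCountingOn S n * Real.log n - psiOn S n| ≤
      (π n * Real.log n - Chebyshev.theta n) + (Chebyshev.psi n - Chebyshev.theta n) := by
  classical
  have hπθ : π n * Real.log n - Chebyshev.theta n =
      ∑ k ∈ Icc 1 n, if k.Prime then Real.log n - Real.log k else 0 := by
    rw [← sum_filter, ← Nat.primesLE_eq_filter_Icc_one, sum_sub_distrib, sum_const, nsmul_eq_mul,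
      Nat.primesLE_card_eq_primeCounting, Chebyshev.theta_eq_sum_primesLE_log]
  have hψθ : Chebyshev.psi n - Chebyshev.theta n =
      ∑ k ∈ Icc 1 n, if k.Prime then 0 else vonMangoldt k := by
    rw [Chebyshev.psi_sub_theta_eq_sum_not_prime, Nat.floor_natCast, sum_filter]
    exact sum_congr rfl fun k _ ↦ ite_not ..
  have hdiff : primeCountingOn S n * Real.log n - psiOn S n =
      ∑ k ∈ Icc 1 n,
        ((if k.Prime ∧ k ∈ S then Real.log n else 0) - S.indicator vonMangoldt k) := by
    rw [sum_sub_distrib, ← sum_filter, sum_const, nsmul_eq_mul, ← filter_filter,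
      ← Nat.primesLE_eq_filter_Icc_one, primeCountingOn, psiOn]
  rw [hπθ, hψθ, hdiff, ← sum_add_distrib]
  refine (abs_sum_le_sum_abs _ _).trans (sum_le_sum fun k hk ↦ ?_)
  obtain ⟨hk1, hkn⟩ := mem_Icc.mp hk
  have hlog : Real.log k ≤ Real.log n :=
    Real.log_le_log (by exact_mod_cast hk1) (by exact_mod_cast hkn)
  by_cases hS : k ∈ S <;> by_cases hp : k.Prime <;>
    simp [hS, hp, vonMangoldt_apply_prime, hlog, abs_of_nonneg]

theorem tendsto_primeCountingOn_mul_log_div {S : Set ℕ} {d : ℝ}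
    (h : Tendsto (fun n ↦ psiOn S n / n) atTop (𝓝 d)) :
    Tendsto (fun n ↦ primeCountingOn S n * Real.log n / n) atTop (𝓝 d) := by
  have hdiff : Tendsto (fun n : ℕ ↦ (primeCountingOn S n * Real.log n - psiOn S n) / n) atTop
      (𝓝 0) := by
    refine squeeze_zero_norm (fun n ↦ ?_) (add_zero (0 : ℝ) ▸
      tendsto_primeCounting_mul_log_sub_theta_div.add tendsto_psi_sub_theta_div)
    rw [norm_div, Real.norm_natCast, ← add_div]
    exact div_le_div_of_nonneg_right (abs_primeCountingOn_mul_log_sub_psiOn_le S n) n.cast_nonneg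
  refine (zero_add d ▸ hdiff.add h).congr fun n ↦ ?_
  rw [← add_div, sub_add_cancel]

theorem tendsto_sum_residueClass_div {q : ℕ} [NeZero q] {a : ZMod q} (ha : IsUnit a) :
    Tendsto (fun n : ℕ ↦ (∑ k ∈ Icc 1 n, residueClass a k) / n) atTop
      (𝓝 (q.totient : ℝ)⁻¹) := by
  refine tendsto_sum_div_of_LSeries_eq (B := Real.log 4 + 4) (residueClass_nonneg a)
    (fun n ↦ ?_) (continuousOn_LFunctionResidueClassAux a) fun s hs ↦ ?_
  · refine le_trans ?_ (Chebyshev.psi_le_const_mul_self n.cast_nonneg)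
    rw [Chebyshev.psi, Nat.floor_natCast]
    exact sum_le_sum fun k _ ↦ residueClass_le a k
  · simp [eqOn_LFunctionResidueClassAux ha hs]

theorem tendsto_psiOn_residueClasses_div {q : ℕ} [NeZero q] {T : Finset (ZMod q)}
    (hT : ∀ a ∈ T, IsUnit a) :
    Tendsto (fun n ↦ psiOn {k | (k : ZMod q) ∈ T} n / n) atTop (𝓝 (#T / q.totient)) := by
  have hsum := tendsto_finsetSum T fun a ha ↦ tendsto_sum_residueClass_div (hT a ha)
  rw [sum_const, nsmul_eq_mul, ← div_eq_mul_inv] at hsum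
  refine hsum.congr fun n ↦ ?_
  rw [← sum_div, sum_comm, psiOn]
  congr 1
  exact sum_congr rfl fun k _ ↦ by simp [residueClass, Set.indicator_apply]

theorem tendsto_primeCounting_mul_log_div :
    Tendsto (fun n : ℕ ↦ π n * Real.log n / n) atTop (𝓝 1) := by
  have h := tendsto_primeCountingOn_mul_log_div (tendsto_psiOn_residueClasses_div
    (q := 1) (T := univ) fun a _ ↦ isUnit_of_subsingleton a)
  simpa only [primeCountingOn, mem_univ, Set.mem_ofPred_eq, filter_true,
    Nat.primesLE_card_eq_primeCounting, card_univ, ZMod.card, Nat.totient_one, Nat.cast_one,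
    div_one] using h

theorem hasPrimeDensity_of_tendsto_psiOn_div {S : Set ℕ} {d : ℝ}
    (h : Tendsto (fun n ↦ psiOn S n / n) atTop (𝓝 d)) : HasPrimeDensity S d := by
  have hquot := (tendsto_primeCountingOn_mul_log_div h).div tendsto_primeCounting_mul_log_div
    one_ne_zero
  rw [div_one] at hquot
  refine Tendsto.congr' ?_ hquot
  filter_upwards [eventually_gt_atTop 1] with n hn
  have hn1 : (1 : ℝ) < n := by exact_mod_cast hn
  rw [Pi.div_apply, div_div_div_cancel_right₀ (by positivity),
    mul_div_mul_right _ _ (Real.log_pos hn1).ne']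

theorem hasPrimeDensity_residueClasses {q : ℕ} [NeZero q] {T : Finset (ZMod q)}
    (hT : ∀ a ∈ T, IsUnit a) : HasPrimeDensity {k | (k : ZMod q) ∈ T} (#T / q.totient) :=
  hasPrimeDensity_of_tendsto_psiOn_div (tendsto_psiOn_residueClasses_div hT)

end PrimeDensity

section NonresidueClasses

open Finset

theorem legendreSym_and_neg_eq_neg_one_iff (q : ℕ) [Fact q.Prime] (a : ℤ) :
    legendreSym q a = -1 ∧ legendreSym q (-a) = -1 ↔ q % 4 = 1 ∧ jacobiSym a q = -1 := by
  rw [jacobiSym.legendreSym.to_jacobiSym, jacobiSym.legendreSym.to_jacobiSym]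
  rcases (Fact.out : q.Prime).eq_two_or_odd' with rfl | hq
  · have hne (b : ℤ) : jacobiSym b 2 ≠ -1 := fun h ↦ ZMod.nonsquare_of_jacobiSym_eq_neg_one h
      (FiniteField.isSquare_of_char_two (ZMod.ringChar_zmod_n 2) _)
    simp [hne]
  · rw [jacobiSym.neg a hq]
    rcases Nat.odd_mod_four_iff.mp (Nat.odd_iff.mp hq) with h | h
    · simp [h, ZMod.χ₄_nat_one_mod_four h]
    · simp only [h, ZMod.χ₄_nat_three_mod_four h]
      lia

/-- The residue classes modulo `4 * n` of the odd positive integers `b ≡ 1 [MOD 4]` with Jacobi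
symbol `(n / b) = -1`, which by quadratic reciprocity depends on `b` modulo `4 * n` only. -/
def nonresidueClasses (n : ℕ) [NeZero n] : Finset (ZMod (4 * n)) :=
  {a | a.val % 4 = 1 ∧ jacobiSym n a.val = -1}

theorem natCast_mem_nonresidueClasses {n b : ℕ} [NeZero n] :
    (b : ZMod (4 * n)) ∈ nonresidueClasses n ↔ b % 4 = 1 ∧ jacobiSym n b = -1 := by
  rw [nonresidueClasses, mem_filter_univ, ZMod.val_natCast, Nat.mod_mul_right_mod]
  refine and_congr_right fun hb ↦ ?_
  rw [← jacobiSym.mod_right' n (Nat.odd_iff.mpr (Nat.odd_of_mod_four_eq_one hb))]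

theorem isUnit_of_mem_nonresidueClasses {n : ℕ} [NeZero n] {a : ZMod (4 * n)}
    (ha : a ∈ nonresidueClasses n) : IsUnit a := by
  rw [← ZMod.natCast_zmod_val a] at ha ⊢
  obtain ⟨h4, hJ⟩ := natCast_mem_nonresidueClasses.mp ha
  rw [ZMod.isUnit_iff_coprime]
  have hodd : Odd a.val := Nat.odd_iff.mpr (Nat.odd_of_mod_four_eq_one h4)
  have hgcd : (n : ℤ).gcd a.val = 1 := by
    by_contra h
    rw [jacobiSym.eq_zero_iff.mpr ⟨hodd.pos.ne', h⟩] at hJ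
    exact absurd hJ (by decide)
  exact .mul_right (.pow_right 2 (Nat.coprime_two_right.mpr hodd))
    (Nat.Coprime.symm (by exact_mod_cast hgcd))

theorem jacobiSym_eq_one_of_modEq_one {r b : ℕ} (hb : b ≡ 1 [MOD 4 * r]) :
    jacobiSym r b = 1 := by
  have hodd : Odd b := Nat.odd_iff.mpr (Nat.odd_of_mod_four_eq_one (hb.of_mul_right r))
  rw [jacobiSym.mod_right' r hodd, hb, ← jacobiSym.mod_right' r odd_one, jacobiSym.one_right]

theorem exists_modEq_one_jacobiSym_eq_neg_one {p r : ℕ} (hp : p.Prime) (hpr : p.Coprime r) :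
    ∃ b, b ≡ 1 [MOD 4 * r] ∧ jacobiSym p b = -1 := by
  rcases hp.eq_two_or_odd' with rfl | hodd
  · obtain ⟨b, hb8, hbr⟩ := Nat.chineseRemainder (Nat.Coprime.pow_left 3 hpr) 5 1
    refine ⟨b, (Nat.modEq_and_modEq_iff_modEq_mul (hpr.pow_left 2)).mp
      ⟨(hb8.of_dvd (by norm_num : 2 ^ 2 ∣ 2 ^ 3)).trans rfl, hbr⟩, ?_⟩
    have hb : b % 8 = 5 := hb8
    rw [Nat.cast_ofNat, jacobiSym.at_two (Nat.odd_iff.mpr (by lia)), ZMod.χ₈_nat_mod_eight, hb]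
    rfl
  · have : Fact p.Prime := ⟨hp⟩
    obtain ⟨u, hu⟩ := FiniteField.exists_nonsquare (F := ZMod p) (by
      rw [ZMod.ringChar_zmod_n]
      rintro rfl
      exact absurd hodd (by decide))
    have hcop : (4 * r).Coprime p :=
      Nat.Coprime.mul_left (Nat.Coprime.pow_left 2 (Nat.coprime_two_left.mpr hodd)) hpr.symm
    obtain ⟨b, hb1, hbu⟩ := Nat.chineseRemainder hcop 1 u.val
    refine ⟨b, hb1, ?_⟩
    have hbu' : (b : ZMod p) = u := by
      rw [(ZMod.natCast_eq_natCast_iff _ _ _).mpr hbu, ZMod.natCast_zmod_val]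
    rw [jacobiSym.quadratic_reciprocity_one_mod_four' hodd (hb1.of_mul_right r),
      ← jacobiSym.legendreSym.to_jacobiSym, legendreSym.eq_neg_one_iff, Int.cast_natCast, hbu']
    exact hu

theorem exists_prime_odd_factorization {n : ℕ} (hn : ¬IsSquare n) :
    ∃ p, p.Prime ∧ Odd (n.factorization p) := by
  by_contra! heven
  have hn0 : n ≠ 0 := by
    rintro rfl
    exact hn .zero
  refine hn (Nat.prod_factorization_pow_eq_self hn0 ▸ Finset.isSquare_prod _ fun p hp ↦ ?_)
  exact (Nat.not_odd_iff_even.mp (heven p (Nat.prime_of_mem_primeFactors hp))).isSquare_pow p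

theorem nonresidueClasses_nonempty {n : ℕ} [NeZero n] (hn : ¬IsSquare n) :
    (nonresidueClasses n).Nonempty := by
  obtain ⟨p, hp, hodd⟩ := exists_prime_odd_factorization hn
  obtain ⟨b, hb, hJ⟩ := exists_modEq_one_jacobiSym_eq_neg_one hp
    (Nat.coprime_ordCompl hp (NeZero.ne n))
  refine ⟨b, natCast_mem_nonresidueClasses.mpr ⟨hb.of_mul_right _, ?_⟩⟩
  rw [← Nat.ordProj_mul_ordCompl_eq_self n p, Nat.cast_mul, Nat.cast_pow, jacobiSym.mul_left,
    jacobiSym.pow_left, hJ, hodd.neg_one_pow, jacobiSym_eq_one_of_modEq_one hb, mul_one]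

end NonresidueClasses

theorem stmt17_general (n : ℕ) (hn : ¬IsSquare n) :
    ∃ δ : ℝ, 0 < δ ∧
      Tendsto (fun x : ℕ =>
        (Nat.card {q : ℕ // (∃ hq : q.Prime, q ≠ 2 ∧ q ≠ n ∧
            @legendreSym q ⟨hq⟩ (n : ℤ) = -1 ∧ @legendreSym q ⟨hq⟩ (-(n : ℤ)) = -1) ∧
            q ≤ x} : ℝ) /
          (Nat.card {q : ℕ // q.Prime ∧ q ≤ x} : ℝ)) atTop (𝓝 δ) := by
  have : NeZero n := ⟨by rintro rfl; exact hn .zero⟩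
  have hcard : 0 < (nonresidueClasses n).card := (nonresidueClasses_nonempty hn).card_pos
  have htot : 0 < (4 * n).totient := Nat.totient_pos.mpr (NeZero.pos _)
  refine ⟨(nonresidueClasses n).card / (4 * n).totient, by positivity, ?_⟩
  refine HasPrimeDensity.tendsto_natCard_div ?_ fun q ⟨hq, _⟩ ↦ hq
  refine (hasPrimeDensity_residueClasses fun _ ↦ isUnit_of_mem_nonresidueClasses).congr
    fun q hq ↦ ?_
  have : Fact q.Prime := ⟨hq⟩
  simp only [Set.mem_ofPred_eq, natCast_mem_nonresidueClasses, legendreSym_and_neg_eq_neg_one_iff,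
    hq, exists_true_left]
  refine ⟨fun h ↦ ⟨?_, ?_, h⟩, fun h ↦ h.2.2⟩
  · rintro rfl
    lia
  · rintro rfl
    rw [jacobiSym.eq_zero_iff.mpr ⟨NeZero.ne q, by simpa using hq.ne_one⟩] at h
    exact absurd h.2 (by decide)

theorem stmt17 (p : ℕ) (hp : p.Prime) :
    ∃ δ : ℝ, 0 < δ ∧
      Tendsto (fun x : ℕ =>
        (Nat.card {q : ℕ // (∃ hq : q.Prime, q ≠ 2 ∧ q ≠ p ∧
            @legendreSym q ⟨hq⟩ (p : ℤ) = -1 ∧ @legendreSym q ⟨hq⟩ (-(p : ℤ)) = -1) ∧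
            q ≤ x} : ℝ) /
          (Nat.card {q : ℕ // q.Prime ∧ q ≤ x} : ℝ)) atTop (𝓝 δ) :=
  stmt17_general p hp.prime.not_isSquare
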